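/- arXiv:1906.00154 — 8 statements merged into one kernel-verified Lean document; each statement's English description precedes it below -/
import Mathlib

section
/- For any two regular dominant real weights λ = (λ_1 < λ_2 < ... < λ_n) and μ = (μ_1 < μ_2 < ... < μ_n) in ℝ^n, the Gelfand–Zetlin polytopes Δ_λ and Δ_μ are normally equivalent, i.e., they have the same normal fan: for all u, v ∈ ℝ^N one has F_{Δ_λ}(u) = F_{Δ_λ}(v) if and only if F_{Δ_μ}(u) = F_{Δ_μ}(v). -/
/-- Index set for Gelfand–Zetlin arrays: pairs `(i, j)` with `1 ≤ i`, `1 ≤ j`,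
`i + j ≤ n` (row `i`, column `j`, so `1 ≤ i ≤ n-1` and `1 ≤ j ≤ n-i`). -/
abbrev GZIdx (n : ℕ) :=
  {p : Fin (n + 1) × Fin (n + 1) // 1 ≤ p.1.val ∧ 1 ≤ p.2.val ∧ p.1.val + p.2.val ≤ n}

/-- Constructor for elements of `GZIdx n`. -/
def gzIdx (n i j : ℕ) (hi : 1 ≤ i) (hj : 1 ≤ j) (hij : i + j ≤ n) : GZIdx n :=
  ⟨(⟨i, by omega⟩, ⟨j, by omega⟩), ⟨hi, hj, hij⟩⟩

/-- The Gelfand–Zetlin polytope `Δ_λ ⊆ ℝ^N` of a weight `λ = (λ_1, …, λ_n)`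
(`lam` is 0-indexed, so `λ_j = lam ⟨j-1⟩`): the set of arrays `(x_{i,j})`
with `λ_j ≤ x_{1,j} ≤ λ_{j+1}` for `1 ≤ j ≤ n-1` and
`x_{i-1,j} ≤ x_{i,j} ≤ x_{i-1,j+1}` for `2 ≤ i`, `1 ≤ j`, `i + j ≤ n`. -/
def gzPolytope (n : ℕ) (lam : Fin n → ℝ) : Set (EuclideanSpace ℝ (GZIdx n)) :=
  {x | (∀ (j : ℕ) (h1 : 1 ≤ j) (h2 : j ≤ n - 1),
          lam ⟨j - 1, by omega⟩ ≤ x (gzIdx n 1 j (by omega) h1 (by omega)) ∧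
          x (gzIdx n 1 j (by omega) h1 (by omega)) ≤ lam ⟨j, by omega⟩) ∧
       (∀ (i j : ℕ) (hi : 2 ≤ i) (hj : 1 ≤ j) (hij : i + j ≤ n),
          x (gzIdx n (i - 1) j (by omega) hj (by omega)) ≤ x (gzIdx n i j (by omega) hj hij) ∧
          x (gzIdx n i j (by omega) hj hij) ≤
            x (gzIdx n (i - 1) (j + 1) (by omega) (by omega) (by omega)))}

/-- The face of a set `P` in direction `u`: the points of `P` where the linear
functional `⟨u, ·⟩` attains its maximum over `P`. -/
def faceIn {ι : Type*} [Fintype ι] (P : Set (EuclideanSpace ℝ ι))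
    (u : EuclideanSpace ℝ ι) : Set (EuclideanSpace ℝ ι) :=
  {x | x ∈ P ∧ ∀ y ∈ P, (inner ℝ u y : ℝ) ≤ (inner ℝ u x : ℝ)}

open Filter Topology in
theorem exists_small {κ : Type*} [Finite κ] (R : κ → κ → Prop) (p d : κ → ℝ)
    (hp : ∀ a b, R a b → p a ≤ p b) (hd : ∀ a b, R a b → p a = p b → d a ≤ d b) :
    ∃ e : ℝ, 0 < e ∧ ∀ a b, R a b → p a + e * d a ≤ p b + e * d b := by
  have key : ∀ᶠ e in 𝓝[>] (0:ℝ), ∀ a b, R a b → p a + e * d a ≤ p b + e * d b := by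
    rw [eventually_all]; intro a
    rw [eventually_all]; intro b
    by_cases hR : R a b
    · rcases (hp a b hR).eq_or_lt with h | h
      · filter_upwards [self_mem_nhdsWithin] with e he _
        have := mul_le_mul_of_nonneg_left (hd a b hR h) (le_of_lt he)
        linarith
      · have hc : ContinuousAt (fun e : ℝ => (p b + e * d b) - (p a + e * d a)) 0 := by fun_prop
        have := hc.eventually (lt_mem_nhds (a := (0:ℝ)) (by simpa using h))
        filter_upwards [nhdsWithin_le_nhds this] with e he _
        linarith
    · exact Eventually.of_forall fun e h => absurd h hR
  obtain ⟨e, h1, h2⟩ := (key.and self_mem_nhdsWithin).exists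
  exact ⟨e, h2, h1⟩

def absPoly {n : ℕ} {ι : Type*} (R : Fin n ⊕ ι → Fin n ⊕ ι → Prop) (lam : Fin n → ℝ) :
    Set (EuclideanSpace ℝ ι) :=
  {x | ∀ a b, R a b → Sum.elim lam (fun i => x i) a ≤ Sum.elim lam (fun i => x i) b}

theorem mem_face_iff {n : ℕ} {ι : Type*} [Fintype ι] (R : Fin n ⊕ ι → Fin n ⊕ ι → Prop)
    (lam : Fin n → ℝ) (u x : EuclideanSpace ℝ ι) (hx : x ∈ absPoly R lam) :
    x ∈ faceIn (absPoly R lam) u ↔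
      ∀ d : EuclideanSpace ℝ ι, (∀ a b, R a b →
        Sum.elim lam (fun i => x i) a = Sum.elim lam (fun i => x i) b →
        Sum.elim (0 : Fin n → ℝ) (fun i => d i) a ≤ Sum.elim (0 : Fin n → ℝ) (fun i => d i) b) →
        (inner ℝ u d : ℝ) ≤ 0 := by
  constructor
  · rintro ⟨_, hm⟩ d hd
    obtain ⟨e, he, h⟩ := exists_small R _ _ hx hd
    have hy : x + e • d ∈ absPoly R lam := by
      intro a b hR
      have := h a b hR
      rcases a with a | a <;> rcases b with b | b <;> simpa using this
    have := hm _ hy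
    rw [inner_add_right, inner_smul_right] at this
    by_contra hc
    push Not at hc
    have := mul_pos he hc
    linarith
  · intro h
    refine ⟨hx, fun y hy => ?_⟩
    have := h (y - x) (by
      intro a b hR ht
      have := hy a b hR
      rcases a with a | a <;> rcases b with b | b <;> simp at this ht ⊢ <;> linarith)
    rw [inner_sub_right] at this
    linarith

theorem exists_strictMono {n : ℕ} (lam mu : Fin n → ℝ) (hlam : StrictMono lam)
    (hmu : StrictMono mu) : ∃ g : ℝ → ℝ, StrictMono g ∧ ∀ i, g (mu i) = lam i := by
  have key : ∀ k : ℕ, ∃ g : ℝ → ℝ, StrictMono g ∧ ∀ i : Fin n, i.val ≤ k → g (mu i) = lam i := by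
    intro k
    induction k with
    | zero =>
      by_cases hn : 0 < n
      · refine ⟨fun t => t + (lam ⟨0, hn⟩ - mu ⟨0, hn⟩), fun a b h => by simpa using h, ?_⟩
        intro i hi
        obtain rfl : i = ⟨0, hn⟩ := Fin.ext (by simpa using hi)
        simp
      · exact ⟨id, strictMono_id, fun i => absurd i.pos hn⟩
    | succ k ih =>
      obtain ⟨g, hg, h⟩ := ih
      by_cases hn : k + 1 < n
      · set p : Fin n := ⟨k, by omega⟩
        set q : Fin n := ⟨k + 1, hn⟩
        have hpq : p < q := by simp [p, q]
        have h1 := hlam hpq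
        have h2 := hmu hpq
        have hgp : g (mu p) = lam p := h p le_rfl
        set s := (lam q - lam p) / (mu q - mu p) with hs
        have hspos : 0 < s := div_pos (by linarith) (by linarith)
        refine ⟨fun t => if t ≤ mu p then g t else lam p + s * (t - mu p), ?_, ?_⟩
        · intro a b hab
          dsimp only
          split_ifs with ha hb hb
          · exact hg hab
          · have := hg.monotone ha
            have := mul_pos hspos (sub_pos.2 (not_le.1 hb))
            linarith
          · linarith
          · have := mul_lt_mul_of_pos_left hab hspos
            linarith
        · intro i hi
          dsimp only
          rcases Nat.le_succ_iff.1 hi with hi | hi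
          · rw [if_pos (hmu.monotone (show i ≤ p from hi))]
            exact h i hi
          · obtain rfl : i = q := Fin.ext hi
            rw [if_neg (not_le.2 h2), hs, div_mul_cancel₀ _ (by linarith)]
            ring
      · exact ⟨g, hg, fun i hi => h i (by omega)⟩
  obtain ⟨g, hg, h⟩ := key n
  exact ⟨g, hg, fun i => h i i.2.le⟩

theorem abs_imp {n : ℕ} {ι : Type*} [Fintype ι] (R : Fin n ⊕ ι → Fin n ⊕ ι → Prop)
    (lam mu : Fin n → ℝ) (hlam : StrictMono lam) (hmu : StrictMono mu)
    (u v : EuclideanSpace ℝ ι)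
    (h : faceIn (absPoly R lam) u ⊆ faceIn (absPoly R lam) v) :
    faceIn (absPoly R mu) u ⊆ faceIn (absPoly R mu) v := by
  intro y hy
  obtain ⟨g, hg, hgm⟩ := exists_strictMono lam mu hlam hmu
  have hyP := hy.1
  let x : EuclideanSpace ℝ ι := WithLp.toLp 2 fun i => g (y i)
  have hval : ∀ a, Sum.elim lam (fun i => x i) a = g (Sum.elim mu (fun i => y i) a) := by
    rintro (a | a)
    · simp [hgm]
    · simp [x]
  have hxP : x ∈ absPoly R lam := by
    intro a b hR
    rw [hval, hval]
    exact hg.monotone (hyP a b hR)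
  have ht : ∀ a b, Sum.elim lam (fun i => x i) a = Sum.elim lam (fun i => x i) b ↔
      Sum.elim mu (fun i => y i) a = Sum.elim mu (fun i => y i) b := by
    intro a b
    rw [hval, hval, hg.injective.eq_iff]
  have hiff : ∀ w, x ∈ faceIn (absPoly R lam) w ↔ y ∈ faceIn (absPoly R mu) w := by
    intro w
    rw [mem_face_iff R lam w x hxP, mem_face_iff R mu w y hyP]
    simp only [ht]
  exact (hiff v).1 (h ((hiff u).2 hy))

inductive gzRel (n : ℕ) : Fin n ⊕ GZIdx n → Fin n ⊕ GZIdx n → Prop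
  | l1 (j : ℕ) (h1 : 1 ≤ j) (h2 : j ≤ n - 1) :
      gzRel n (.inl ⟨j - 1, by omega⟩) (.inr (gzIdx n 1 j (by omega) h1 (by omega)))
  | l2 (j : ℕ) (h1 : 1 ≤ j) (h2 : j ≤ n - 1) :
      gzRel n (.inr (gzIdx n 1 j (by omega) h1 (by omega))) (.inl ⟨j, by omega⟩)
  | r1 (i j : ℕ) (hi : 2 ≤ i) (hj : 1 ≤ j) (hij : i + j ≤ n) :
      gzRel n (.inr (gzIdx n (i - 1) j (by omega) hj (by omega)))
        (.inr (gzIdx n i j (by omega) hj hij))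
  | r2 (i j : ℕ) (hi : 2 ≤ i) (hj : 1 ≤ j) (hij : i + j ≤ n) :
      gzRel n (.inr (gzIdx n i j (by omega) hj hij))
        (.inr (gzIdx n (i - 1) (j + 1) (by omega) (by omega) (by omega)))

theorem gz_eq (n : ℕ) (lam : Fin n → ℝ) : gzPolytope n lam = absPoly (gzRel n) lam := by
  ext x
  constructor
  · rintro ⟨h1, h2⟩ a b hR
    cases hR with
    | l1 j a b => exact (h1 j a b).1
    | l2 j a b => exact (h1 j a b).2
    | r1 i j a b c => exact (h2 i j a b c).1
    | r2 i j a b c => exact (h2 i j a b c).2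
  · intro h
    exact ⟨fun j a b => ⟨h _ _ (.l1 j a b), h _ _ (.l2 j a b)⟩,
      fun i j a b c => ⟨h _ _ (.r1 i j a b c), h _ _ (.r2 i j a b c)⟩⟩

/-- For any two regular dominant real weights `λ, μ`, the Gelfand–Zetlin polytopes
`Δ_λ` and `Δ_μ` are normally equivalent (have the same normal fan). -/
theorem gz_polytopes_normally_equivalent (n : ℕ) (hn : 2 ≤ n)
    (lam mu : Fin n → ℝ) (hlam : StrictMono lam) (hmu : StrictMono mu) :
    ∀ u v : EuclideanSpace ℝ (GZIdx n),
      faceIn (gzPolytope n lam) u = faceIn (gzPolytope n lam) v ↔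
      faceIn (gzPolytope n mu) u = faceIn (gzPolytope n mu) v := by
  intro u v
  rw [gz_eq, gz_eq]
  constructor
  · intro h
    exact (abs_imp _ lam mu hlam hmu u v h.le).antisymm (abs_imp _ lam mu hlam hmu v u h.ge)
  · intro h
    exact (abs_imp _ mu lam hmu hlam u v h.le).antisymm (abs_imp _ mu lam hmu hlam v u h.ge)
end

section
/- Let P ⊂ ℝ^N (N = n(n-1)/2) be a polytope (convex hull of a nonempty finite set) that is normally equivalent to the Gelfand–Zetlin polytope Δ_μ of the regular dominant weight μ = (1, 2, ..., n), i.e., for all u, v ∈ ℝ^N: F_P(u) = F_P(v) ⟺ F_{Δ_μ}(u) = F_{Δ_μ}(v). Then there exist a dominant λ = (λ_1 ≤ ... ≤ λ_n) ∈ ℝ^n and c ∈ ℝ^N such that P = c + Δ_λ (pointwise translation). -/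
section GZhelpers

variable {ι : Type*} [Fintype ι]

lemma faceIn_transfer (D P : Set (EuclideanSpace ℝ ι))
    (hne : ∀ u v : EuclideanSpace ℝ ι, faceIn P u = faceIn P v ↔ faceIn D u = faceIn D v)
    (u w : EuclideanSpace ℝ ι) (h0 : (faceIn D u).Nonempty) (hsub : faceIn D u ⊆ faceIn D w) :
    faceIn P u ⊆ faceIn P w := by
  have key : ∀ s : ℝ, 0 < s → faceIn P (u + s • w) = faceIn P u := by
    intro s hs
    rw [hne]
    obtain ⟨z, hz⟩ := h0
    have hzw := hsub hz
    ext x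
    simp only [faceIn, Set.mem_ofPred_eq, inner_add_left, real_inner_smul_left] at *
    constructor
    · rintro ⟨hx, h⟩
      refine ⟨hx, fun y hy => ?_⟩
      have h1 := h z hz.1
      have h2 := hzw.2 x hx
      have h3 := hz.2 y hy
      nlinarith
    · rintro ⟨hx, h⟩
      refine ⟨hx, fun y hy => ?_⟩
      have h2 := (hsub ⟨hx, h⟩).2 y hy
      have h3 := h y hy
      nlinarith
  intro x hx
  refine ⟨hx.1, fun y hy => ?_⟩
  by_contra hlt
  push Not at hlt
  set d := (inner ℝ w y : ℝ) - inner ℝ w x with hd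
  have hdpos : 0 < d := by rw [hd]; linarith
  set e := (inner ℝ u x : ℝ) - inner ℝ u y with he
  have hepos : 0 ≤ e := by have := hx.2 y hy; rw [he]; linarith
  have hs : 0 < (e + 1) / d := by positivity
  have hx' : x ∈ faceIn P (u + ((e + 1) / d) • w) := by rw [key _ hs]; exact hx
  have := hx'.2 y hy
  simp only [inner_add_left, real_inner_smul_left] at this
  have h5 : (e + 1) / d * d = e + 1 := by field_simp
  have h6 : (e + 1) / d * d = (e + 1) / d * inner ℝ w y - (e + 1) / d * inner ℝ w x := by
    rw [hd]; ring
  linarith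

lemma faceIn_nonempty (P : Set (EuclideanSpace ℝ ι)) (hc : IsCompact P) (h0 : P.Nonempty)
    (u : EuclideanSpace ℝ ι) : (faceIn P u).Nonempty := by
  obtain ⟨x, hx, h⟩ := hc.exists_isMaxOn h0
    (f := fun y => (inner ℝ u y : ℝ)) (by fun_prop)
  exact ⟨x, hx, fun y hy => h hy⟩

lemma faceIn_sum_sub {K : Type*} (D : Set (EuclideanSpace ℝ ι)) (T : Finset K)
    (a : K → EuclideanSpace ℝ ι) (z : EuclideanSpace ℝ ι)
    (hzD : z ∈ D) (hz : ∀ k ∈ T, z ∈ faceIn D (a k)) :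
    z ∈ faceIn D (∑ k ∈ T, a k) ∧ ∀ k ∈ T, faceIn D (∑ k ∈ T, a k) ⊆ faceIn D (a k) := by
  constructor
  · refine ⟨hzD, fun y hy => ?_⟩
    rw [sum_inner, sum_inner]
    exact Finset.sum_le_sum fun k hk => (hz k hk).2 y hy
  · intro k hk x hx
    refine ⟨hx.1, fun y hy => ?_⟩
    have h1 := hx.2 z hzD
    rw [sum_inner, sum_inner] at h1
    have h2 : ∀ k ∈ T, (inner ℝ (a k) x : ℝ) ≤ inner ℝ (a k) z := fun k hk => (hz k hk).2 x hx.1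
    have h3 := (Finset.sum_eq_sum_iff_of_le h2).1 (le_antisymm (Finset.sum_le_sum h2) h1) k hk
    rw [h3]
    exact (hz k hk).2 y hy

lemma gz_sub_P {K : Type*} [Fintype K] (D P : Set (EuclideanSpace ℝ ι))
    (hne : ∀ u v : EuclideanSpace ℝ ι, faceIn P u = faceIn P v ↔ faceIn D u = faceIn D v)
    (a : K → EuclideanSpace ℝ ι) (b : K → ℝ)
    (hD : ∀ x, x ∈ D ↔ ∀ k, (inner ℝ (a k) x : ℝ) ≤ b k)
    (hDc : IsCompact D) (hD0 : D.Nonempty) (hPc : IsCompact P) (hP0 : P.Nonempty)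
    (hPconv : Convex ℝ P) (h : K → ℝ)
    (hh : ∀ k, ∀ z ∈ faceIn P (a k), (inner ℝ (a k) z : ℝ) = h k)
    (x : EuclideanSpace ℝ ι) (hx : ∀ k, (inner ℝ (a k) x : ℝ) ≤ h k) : x ∈ P := by
  classical
  by_contra hxP
  obtain ⟨f, s, hf1, hf2⟩ := geometric_hahn_banach_closed_point hPconv hPc.isClosed hxP
  set u := (InnerProductSpace.toDual ℝ (EuclideanSpace ℝ ι)).symm f with hu
  have hfu : ∀ y, f y = inner ℝ u y := fun y => by
    rw [hu, InnerProductSpace.toDual_symm_apply]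
  obtain ⟨y, hy⟩ := faceIn_nonempty D hDc hD0 u
  let T : Finset K := Finset.univ.filter fun k => (inner ℝ (a k) y : ℝ) = b k
  have hT : ∀ k ∈ T, y ∈ faceIn D (a k) := by
    intro k hk
    have hk' : (inner ℝ (a k) y : ℝ) = b k := by simpa [T] using hk
    refine ⟨hy.1, fun y' hy' => ?_⟩
    rw [hk']
    exact (hD y').1 hy' k
  obtain ⟨hs1, hs2⟩ := faceIn_sum_sub D T a y hy.1 hT
  obtain ⟨x0, hx0⟩ := faceIn_nonempty P hPc hP0 (∑ k ∈ T, a k)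
  have hx0T : ∀ k ∈ T, (inner ℝ (a k) x0 : ℝ) = h k := fun k hk =>
    hh k x0 (faceIn_transfer D P hne _ _ ⟨y, hs1⟩ (hs2 k hk) hx0)
  set d := x - x0 with hd
  have hdT : ∀ k ∈ T, (inner ℝ (a k) d : ℝ) ≤ 0 := by
    intro k hk
    rw [hd, inner_sub_right, hx0T k hk]
    linarith [hx k]
  have hud : 0 < (inner ℝ u d : ℝ) := by
    rw [hd, inner_sub_right, ← hfu, ← hfu]
    linarith [hf1 x0 hx0.1]
  have hev : ∀ k, ∃ e : ℝ, 0 < e ∧ ∀ t : ℝ, 0 < t → t ≤ e → (inner ℝ (a k) (y + t • d) : ℝ) ≤ b k := by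
    intro k
    by_cases hk : k ∈ T
    · refine ⟨1, one_pos, fun t ht _ => ?_⟩
      rw [inner_add_right, real_inner_smul_right]
      have h1 := (hD y).1 hy.1 k
      nlinarith [hdT k hk]
    · have h1 : (inner ℝ (a k) y : ℝ) < b k :=
        lt_of_le_of_ne ((hD y).1 hy.1 k) (by simpa [T] using hk)
      set g := b k - inner ℝ (a k) y with hg
      set m := |(inner ℝ (a k) d : ℝ)| + 1 with hm
      have hg0 : 0 < g := by rw [hg]; linarith
      have hm0 : 0 < m := by positivity
      refine ⟨g / m, by positivity, fun t ht hte => ?_⟩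
      rw [inner_add_right, real_inner_smul_right]
      have h2 : t * m ≤ g := by rwa [le_div_iff₀ hm0] at hte
      have h3 := le_abs_self (inner ℝ (a k) d : ℝ)
      have h4 : t * inner ℝ (a k) d ≤ t * m := by
        apply mul_le_mul_of_nonneg_left _ ht.le
        rw [hm]; linarith
      linarith
  choose e he0 he using hev
  obtain ⟨t, ht0, ht⟩ : ∃ t : ℝ, 0 < t ∧ ∀ k, t ≤ e k := by
    rcases isEmpty_or_nonempty K with hK | hK
    · exact ⟨1, one_pos, fun k => hK.elim k⟩
    · refine ⟨Finset.univ.inf' Finset.univ_nonempty e, ?_, fun k => Finset.inf'_le _ (Finset.mem_univ k)⟩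
      rw [Finset.lt_inf'_iff]
      exact fun k _ => he0 k
  have hmem : y + t • d ∈ D := (hD _).2 fun k => he k t ht0 (ht k)
  have := hy.2 _ hmem
  rw [inner_add_right, real_inner_smul_right] at this
  nlinarith

noncomputable def gzEv (n i j : ℕ) : EuclideanSpace ℝ (GZIdx n) :=
  if h : 1 ≤ i ∧ 1 ≤ j ∧ i + j ≤ n then EuclideanSpace.single (gzIdx n i j h.1 h.2.1 h.2.2) 1 else 0

lemma gzEv_inner (n i j : ℕ) (hi : 1 ≤ i) (hj : 1 ≤ j) (hij : i + j ≤ n)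
    (x : EuclideanSpace ℝ (GZIdx n)) : (inner ℝ (gzEv n i j) x : ℝ) = x (gzIdx n i j hi hj hij) := by
  rw [gzEv, dif_pos ⟨hi, hj, hij⟩, EuclideanSpace.inner_single_left]
  simp

lemma gzEv_zero (n j : ℕ) : gzEv n 0 j = 0 := by
  rw [gzEv, dif_neg (by omega)]

/-- lower and upper normals -/
noncomputable def gzNm (n : ℕ) (s : Bool) (i j : ℕ) : EuclideanSpace ℝ (GZIdx n) :=
  if s then gzEv n i j - gzEv n (i - 1) (j + 1) else gzEv n (i - 1) j - gzEv n i j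

noncomputable def gzB (l : ℕ → ℝ) (s : Bool) (i j : ℕ) : ℝ :=
  if i = 1 then (if s then l (j + 1) else - l j) else 0

lemma mem_gz (n : ℕ) (l : ℕ → ℝ) (x : EuclideanSpace ℝ (GZIdx n)) :
    x ∈ gzPolytope n (fun k => l (k.val + 1)) ↔
      ∀ s i j, 1 ≤ i → 1 ≤ j → i + j ≤ n → (inner ℝ (gzNm n s i j) x : ℝ) ≤ gzB l s i j := by
  constructor
  · rintro ⟨h1, h2⟩ s i j hi hj hij
    rcases Nat.lt_or_ge 1 i with hi' | hi'
    · have := h2 i j hi' hj hij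
      cases s
      · simp only [gzNm, gzB, if_neg (show ¬ i = 1 by omega), Bool.false_eq_true, if_true, if_false, inner_sub_left,
          gzEv_inner n i j hi hj hij, gzEv_inner n (i-1) j (by omega) hj (by omega)]
        simp
        linarith [this.1]
      · simp only [gzNm, gzB, if_neg (show ¬ i = 1 by omega), Bool.false_eq_true, if_true, if_false, inner_sub_left,
          gzEv_inner n i j hi hj hij, gzEv_inner n (i-1) (j+1) (by omega) (by omega) (by omega)]
        simp
        linarith [this.2]
    · obtain rfl : i = 1 := by omega
      have := h1 j hj (by omega)
      obtain ⟨j, rfl⟩ : ∃ j', j = j' + 1 := ⟨j - 1, by omega⟩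
      cases s <;> simp [gzNm, gzB, gzEv_zero, gzEv_inner n 1 (j+1) hi hj hij] <;>
        simp at this <;> linarith [this.1, this.2]
  · intro h
    constructor
    · intro j h1 h2
      obtain ⟨j, rfl⟩ : ∃ j', j = j' + 1 := ⟨j - 1, by omega⟩
      have a := h false 1 (j+1) le_rfl h1 (by omega)
      have b := h true 1 (j+1) le_rfl h1 (by omega)
      simp [gzNm, gzB, gzEv_zero, gzEv_inner n 1 (j+1) le_rfl h1 (by omega)] at a b
      simp
      exact ⟨a, b⟩
    · intro i j hi hj hij
      have a := h false i j (by omega) hj hij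
      have b := h true i j (by omega) hj hij
      simp only [gzNm, gzB, if_neg (show ¬ i = 1 by omega), Bool.false_eq_true, if_true, if_false, inner_sub_left,
          gzEv_inner n i j (by omega) hj hij, gzEv_inner n (i-1) (j+1) (by omega) (by omega) (by omega),
          gzEv_inner n (i-1) j (by omega) hj (by omega)] at a b
      simp at a b
      exact ⟨a, b⟩

/-- the clamp point -/
noncomputable def gzClamp (n v : ℕ) : EuclideanSpace ℝ (GZIdx n) :=
  WithLp.toLp 2 fun p => ((max p.1.2.val (min v (p.1.1.val + p.1.2.val)) : ℕ) : ℝ)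

lemma gzClamp_inner (n v i j : ℕ) (hi : 1 ≤ i) (hj : 1 ≤ j) (hij : i + j ≤ n) :
    (inner ℝ (gzEv n i j) (gzClamp n v) : ℝ) = ((max j (min v (i + j)) : ℕ) : ℝ) := by
  rw [gzEv_inner n i j hi hj hij]
  simp [gzClamp, gzIdx]

lemma gzClamp_nm (n v : ℕ) (s : Bool) (i j : ℕ) (hi : 1 ≤ i) (hj : 1 ≤ j) (hij : i + j ≤ n) :
    (inner ℝ (gzNm n s i j) (gzClamp n v) : ℝ) - gzB (fun j => (j : ℝ)) s i j =
     if s then ((max j (min v (i + j)) : ℕ) : ℝ) - ((max (j+1) (min v (i + j)) : ℕ) : ℝ)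
     else ((max j (min v (i - 1 + j)) : ℕ) : ℝ) - ((max j (min v (i + j)) : ℕ) : ℝ) := by
  rcases Nat.lt_or_ge 1 i with hi' | hi'
  · cases s
    · simp only [gzNm, gzB, if_neg (show ¬ i = 1 by omega), Bool.false_eq_true, if_true, if_false, inner_sub_left,
          gzClamp_inner n v i j hi hj hij, gzClamp_inner n v (i-1) j (by omega) hj (by omega)]
      simp [gzClamp_inner n v i j hi hj hij, gzClamp_inner n v (i-1) j (by omega) hj (by omega), inner_sub_left]
    · simp only [gzNm, gzB, if_neg (show ¬ i = 1 by omega), Bool.false_eq_true, if_true, if_false, inner_sub_left,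
          gzClamp_inner n v i j hi hj hij, gzClamp_inner n v (i-1) (j+1) (by omega) (by omega) (by omega)]
      rw [show i - 1 + (j + 1) = i + j by omega]
      simp
  · obtain rfl : i = 1 := by omega
    cases s
    · have h2 : max j (min v (0 + j)) = j := by omega
      simp only [Nat.sub_self, h2]
      simp [gzNm, gzB, gzEv_zero, gzClamp_inner n v 1 j hi hj hij]
      ring
    · have h2 : max (j+1) (min v (1 + j)) = j + 1 := by omega
      simp only [h2]
      simp [gzNm, gzB, gzEv_zero, gzClamp_inner n v 1 j hi hj hij]

lemma gzClamp_mem (n v : ℕ) : gzClamp n v ∈ gzPolytope n (fun i => ((i.val + 1 : ℕ) : ℝ)) := by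
  rw [mem_gz n (fun j => (j : ℝ))]
  intro s i j hi hj hij
  have h := gzClamp_nm n v s i j hi hj hij
  have h1 : ((max j (min v (i + j)) : ℕ) : ℝ) ≤ ((max (j+1) (min v (i + j)) : ℕ) : ℝ) := by
    exact_mod_cast (by omega : max j (min v (i + j)) ≤ max (j+1) (min v (i + j)))
  have h2 : ((max j (min v (i - 1 + j)) : ℕ) : ℝ) ≤ ((max j (min v (i + j)) : ℕ) : ℝ) := by
    exact_mod_cast (by omega : max j (min v (i - 1 + j)) ≤ max j (min v (i + j)))
  cases s
  · simp only [Bool.false_eq_true, if_false] at h; linarith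
  · simp only [if_true] at h; linarith

lemma gz_bdd (n : ℕ) (x : EuclideanSpace ℝ (GZIdx n))
    (hx : x ∈ gzPolytope n (fun i => ((i.val + 1 : ℕ) : ℝ))) (i : ℕ) :
    ∀ j (hi : 1 ≤ i) (hj : 1 ≤ j) (hij : i + j ≤ n),
      0 ≤ x (gzIdx n i j hi hj hij) ∧ x (gzIdx n i j hi hj hij) ≤ n := by
  induction i with
  | zero => intro j hi; omega
  | succ i ih =>
    intro j hi hj hij
    rcases Nat.eq_zero_or_pos i with rfl | hi'
    · have := hx.1 j hj (by omega)
      refine ⟨le_trans (by positivity) this.1, le_trans this.2 ?_⟩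
      simp only [Nat.cast_le]; omega
    · have h := hx.2 (i+1) j (by omega) hj hij
      exact ⟨le_trans (ih j hi' hj (by omega)).1 h.1, le_trans h.2 (ih (j+1) hi' (by omega) (by omega)).2⟩

lemma gz_compact (n : ℕ) (hcl : IsClosed (gzPolytope n (fun i => ((i.val + 1 : ℕ) : ℝ)))) :
    IsCompact (gzPolytope n (fun i => ((i.val + 1 : ℕ) : ℝ))) := by
  have hc : IsCompact ((EuclideanSpace.equiv (GZIdx n) ℝ) ⁻¹' (Set.Icc (fun _ => (0:ℝ)) (fun _ => (n:ℝ)))) :=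
    (EuclideanSpace.equiv (GZIdx n) ℝ).toHomeomorph.isCompact_preimage.2 isCompact_Icc
  refine hc.of_isClosed_subset hcl fun x hx => ?_
  have h := gz_bdd n x hx
  constructor
  · rintro ⟨⟨⟨i, _⟩, ⟨j, _⟩⟩, hi, hj, hij⟩
    exact (h i j hi hj hij).1
  · rintro ⟨⟨⟨i, _⟩, ⟨j, _⟩⟩, hi, hj, hij⟩
    exact (h i j hi hj hij).2

end GZhelpers

/-- Any polytope normally equivalent to the Gelfand–Zetlin polytope of the regular
dominant weight `μ = (1, 2, …, n)` is a translate of a Gelfand–Zetlin polytope of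
some dominant weight `λ`. -/
theorem polytope_with_gz_normal_fan_is_translate_of_gz (n : ℕ) (hn : 2 ≤ n)
    (P : Set (EuclideanSpace ℝ (GZIdx n)))
    (S : Finset (EuclideanSpace ℝ (GZIdx n))) (hS : S.Nonempty)
    (hP : P = convexHull ℝ (S : Set (EuclideanSpace ℝ (GZIdx n))))
    (hne : ∀ u v : EuclideanSpace ℝ (GZIdx n),
      faceIn P u = faceIn P v ↔
      faceIn (gzPolytope n (fun i => (i.val + 1 : ℝ))) u =
        faceIn (gzPolytope n (fun i => (i.val + 1 : ℝ))) v) :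
    ∃ lam : Fin n → ℝ, Monotone lam ∧ ∃ c : EuclideanSpace ℝ (GZIdx n),
      P = (fun x => c + x) '' gzPolytope n lam := by
  have hPc : IsCompact P := by rw [hP]; exact S.finite_toSet.isCompact_convexHull (𝕜 := ℝ)
  have hPconv : Convex ℝ P := by rw [hP]; exact convex_convexHull ℝ _
  have hP0 : P.Nonempty := by rw [hP]; exact (Finset.coe_nonempty.2 hS).convexHull
  have hmu : (fun i : Fin n => (i.val + 1 : ℝ)) = fun i : Fin n => ((i.val + 1 : ℕ) : ℝ) := by
    funext i; push_cast; rfl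
  rw [hmu] at hne
  set D := gzPolytope n (fun i => ((i.val + 1 : ℕ) : ℝ)) with hDdef
  have hDm : ∀ x, x ∈ D ↔ ∀ s i j, 1 ≤ i → 1 ≤ j → i + j ≤ n →
      (inner ℝ (gzNm n s i j) x : ℝ) ≤ gzB (fun j => (j : ℝ)) s i j :=
    fun x => mem_gz n (fun j => (j : ℝ)) x
  have hDcl : IsClosed D := by
    have : D = ⋂ s, ⋂ i, ⋂ j, ⋂ (_ : 1 ≤ i), ⋂ (_ : 1 ≤ j), ⋂ (_ : i + j ≤ n),
        {x | (inner ℝ (gzNm n s i j) x : ℝ) ≤ gzB (fun j => (j : ℝ)) s i j} := by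
      ext x; rw [hDm]; simp only [Set.mem_iInter, Set.mem_ofPred_eq]
    rw [this]
    refine isClosed_iInter fun s => isClosed_iInter fun i => isClosed_iInter fun j =>
      isClosed_iInter fun _ => isClosed_iInter fun _ => isClosed_iInter fun _ => ?_
    exact isClosed_le (by fun_prop) continuous_const
  have hDc : IsCompact D := gz_compact n hDcl
  have hD0 : D.Nonempty := ⟨_, gzClamp_mem n 0⟩
  choose z hz using faceIn_nonempty P hPc hP0
  let H : Bool → ℕ → ℕ → ℝ := fun s i j => inner ℝ (gzNm n s i j) (z (gzNm n s i j))
  have hH1 : ∀ s i j, ∀ y ∈ P, (inner ℝ (gzNm n s i j) y : ℝ) ≤ H s i j :=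
    fun s i j y hy => (hz _).2 y hy
  have hH2 : ∀ s i j, ∀ y ∈ faceIn P (gzNm n s i j), (inner ℝ (gzNm n s i j) y : ℝ) = H s i j :=
    fun s i j y hy => le_antisymm (hH1 s i j y hy.1) (hy.2 _ (hz _).1)
  -- pairs
  have pair : ∀ (y0 p q : EuclideanSpace ℝ (GZIdx n)), y0 ∈ faceIn D p → y0 ∈ faceIn D q →
      faceIn P (p + q) ⊆ faceIn P p ∩ faceIn P q := by
    intro y0 p q hp hq
    have := faceIn_sum_sub D Finset.univ (fun b : Bool => if b then p else q) y0 hp.1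
      (by intro k _; cases k <;> simpa)
    simp only [Fintype.sum_bool, if_true, Bool.false_eq_true, if_false] at this
    refine Set.subset_inter ?_ ?_
    · exact faceIn_transfer D P hne _ _ ⟨y0, this.1⟩ (by simpa using this.2 true (Finset.mem_univ _))
    · exact faceIn_transfer D P hne _ _ ⟨y0, this.1⟩ (by simpa using this.2 false (Finset.mem_univ _))
  have diamond : ∀ i j, 1 ≤ i → 1 ≤ j → i + 1 + j ≤ n →
      H true i j + H false i (j + 1) = H false (i + 1) j + H true (i + 1) j := by
    intro i j hi hj hij
    have tight : ∀ s i' j', 1 ≤ i' → 1 ≤ j' → i' + j' ≤ n →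
        (inner ℝ (gzNm n s i' j') (gzClamp n (i + j)) : ℝ) - gzB (fun j => (j : ℝ)) s i' j' = 0 →
        gzClamp n (i + j) ∈ faceIn D (gzNm n s i' j') := by
      intro s i' j' h1 h2 h3 h
      refine ⟨gzClamp_mem n _, fun y hy => ?_⟩
      have := (hDm y).1 hy s i' j' h1 h2 h3
      linarith
    have t1 := tight true i j hi hj (by omega) (by
      rw [gzClamp_nm n _ _ i j hi hj (by omega), if_pos rfl, sub_eq_zero, Nat.cast_inj]; omega)
    have t2 := tight false i (j+1) hi (by omega) (by omega) (by
      rw [gzClamp_nm n _ _ i (j+1) hi (by omega) (by omega), if_neg (by simp), sub_eq_zero,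
        Nat.cast_inj]; omega)
    have t3 := tight false (i+1) j (by omega) (by omega) (by omega) (by
      rw [gzClamp_nm n _ _ (i+1) j (by omega) (by omega) (by omega), if_neg (by simp), sub_eq_zero,
        Nat.cast_inj]; omega)
    have t4 := tight true (i+1) j (by omega) (by omega) (by omega) (by
      rw [gzClamp_nm n _ _ (i+1) j (by omega) (by omega) (by omega), if_pos rfl, sub_eq_zero,
        Nat.cast_inj]; omega)
    have e : gzNm n true i j + gzNm n false i (j+1) = gzNm n false (i+1) j + gzNm n true (i+1) j := by
      simp [gzNm]
    have p1 := pair _ _ _ t1 t2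
    have p2 := pair _ _ _ t3 t4
    rw [← e] at p2
    have hw := hz (gzNm n true i j + gzNm n false i (j+1))
    rw [← hH2 _ _ _ _ (p1 hw).1, ← hH2 _ _ _ _ (p1 hw).2, ← hH2 _ _ _ _ (p2 hw).1,
      ← hH2 _ _ _ _ (p2 hw).2, ← inner_add_left, ← inner_add_left, e]
  let l : ℕ → ℝ := fun j => ∑ k ∈ Finset.range j, (H false 1 k + H true 1 k)
  have hl : ∀ j, l (j + 1) = l j + (H false 1 j + H true 1 j) := fun j => Finset.sum_range_succ _ _
  have hlm : Monotone l := by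
    refine monotone_nat_of_le_succ fun j => ?_
    rw [hl]
    obtain ⟨y, hy⟩ := hP0
    have h1 := hH1 false 1 j y hy
    have h2 := hH1 true 1 j y hy
    simp [gzNm, gzEv_zero] at h1 h2
    linarith
  let C : ℕ → ℕ → ℝ := fun i j => - l j - ∑ k ∈ Finset.range i, H false (k + 1) j
  have hC0 : ∀ j, C 0 j = - l j := fun j => by simp [C]
  have hCs : ∀ i j, C (i + 1) j = C i j - H false (i + 1) j := fun i j => by
    simp only [C, Finset.sum_range_succ]; ring
  have hCB : ∀ i j, 1 ≤ j → i + 1 + j ≤ n → C (i + 1) j - C i (j + 1) = H true (i + 1) j := by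
    intro i
    induction i with
    | zero => intro j hj hij; rw [hCs, hC0, hC0, hl]; simp; ring
    | succ i ih =>
      intro j hj hij
      have h1 := ih j hj (by omega)
      have h2 := diamond (i+1) j (by omega) hj (by omega)
      have h3 := hCs (i+1) j
      have h4 := hCs i (j+1)
      linarith
  let c : EuclideanSpace ℝ (GZIdx n) := WithLp.toLp 2 fun p => C p.1.1.val p.1.2.val
  have hc : ∀ i j, 1 ≤ i → 1 ≤ j → i + j ≤ n → (inner ℝ (gzEv n i j) c : ℝ) = C i j := by
    intro i j hi hj hij
    rw [gzEv_inner n i j hi hj hij]; simp [c, gzIdx]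
  have hcH : ∀ s i j, 1 ≤ i → 1 ≤ j → i + j ≤ n →
      (inner ℝ (gzNm n s i j) c : ℝ) + gzB l s i j = H s i j := by
    intro s i j hi hj hij
    obtain ⟨i, rfl⟩ : ∃ i', i = i' + 1 := ⟨i - 1, by omega⟩
    rcases Nat.eq_zero_or_pos i with rfl | hi'
    · cases s
      · have := hCs 0 j
        rw [hC0] at this
        simp [gzNm, gzB, gzEv_zero, hc 1 j hi hj hij]
        simp at this
        linarith
      · have := hCB 0 j hj hij
        rw [hC0] at this
        simp [gzNm, gzB, gzEv_zero, hc 1 j hi hj hij]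
        simp at this
        linarith
    · cases s
      · have := hCs i j
        simp [gzNm, gzB, hi'.ne', inner_sub_left, hc i j hi' hj (by omega), hc (i+1) j hi hj hij]
        linarith
      · have := hCB i j hj hij
        simp [gzNm, gzB, hi'.ne', inner_sub_left, hc i (j+1) hi' (by omega) (by omega),
          hc (i+1) j hi hj hij]
        linarith
  refine ⟨fun k => l (k.val + 1), fun a b hab => hlm (by simpa using hab), c, ?_⟩
  ext x
  constructor
  · intro hx
    refine ⟨x - c, ?_, by simp⟩
    rw [mem_gz]
    intro s i j hi hj hij
    rw [inner_sub_right]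
    have h1 := hH1 s i j x hx
    have h2 := hcH s i j hi hj hij
    linarith
  · rintro ⟨y, hy, rfl⟩
    rw [mem_gz] at hy
    refine gz_sub_P (K := Bool × GZIdx n) D P hne
      (fun k => gzNm n k.1 k.2.1.1.val k.2.1.2.val)
      (fun k => gzB (fun j => (j : ℝ)) k.1 k.2.1.1.val k.2.1.2.val) ?_ hDc hD0 hPc hP0 hPconv
      (fun k => H k.1 k.2.1.1.val k.2.1.2.val) (fun k => hH2 _ _ _) _ ?_
    · intro x
      rw [hDm]
      constructor
      · intro h k
        exact h _ _ _ k.2.2.1 k.2.2.2.1 k.2.2.2.2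
      · intro h s i j hi hj hij
        exact h (s, gzIdx n i j hi hj hij)
    · intro k
      have h1 := hy k.1 _ _ k.2.2.1 k.2.2.2.1 k.2.2.2.2
      have h2 := hcH k.1 _ _ k.2.2.1 k.2.2.2.1 k.2.2.2.2
      simp only [inner_add_right]
      linarith
end

section
/- The assignment λ ↦ Δ_λ is additive with respect to Minkowski sum: for any two dominant weights λ = (λ_1 ≤ ... ≤ λ_n) and μ = (μ_1 ≤ ... ≤ μ_n) in ℤ^n, one has Δ_{λ+μ} = Δ_λ + Δ_μ, where the right-hand side is the Minkowski sum {x + y : x ∈ Δ_λ, y ∈ Δ_μ} of subsets of ℝ^N. -/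
/-- Greedy row-by-row splitting. -/
noncomputable def gzSplit (X : ℕ → ℕ → ℝ) (L : ℕ → ℝ) : ℕ → ℕ → ℝ
  | 0, j => L j
  | i + 1, j => max (gzSplit X L i j) (X (i + 1) j - (X i (j + 1) - gzSplit X L i (j + 1)))

theorem gzSplit_step (a b c d x : ℝ) (h1 : a ≤ b) (h2 : c ≤ d) (h3 : a + c ≤ x)
    (h4 : x ≤ b + d) :
    a ≤ max a (x - d) ∧ max a (x - d) ≤ b ∧ c ≤ x - max a (x - d) ∧ x - max a (x - d) ≤ d := by
  refine ⟨le_max_left _ _, max_le h1 (by linarith), ?_, ?_⟩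
  · have : max a (x - d) ≤ x - c := max_le (by linarith) (by linarith)
    linarith
  · have := le_max_right a (x - d)
    linarith

theorem gzSplit_spec (n : ℕ) (X : ℕ → ℕ → ℝ) (L M : ℕ → ℝ)
    (hL : ∀ j, 1 ≤ j → j + 1 ≤ n → L j ≤ L (j + 1))
    (hM : ∀ j, 1 ≤ j → j + 1 ≤ n → M j ≤ M (j + 1))
    (h0 : ∀ j, X 0 j = L j + M j)
    (hX : ∀ i j, 1 ≤ j → i + 1 + j ≤ n → X i j ≤ X (i + 1) j ∧ X (i + 1) j ≤ X i (j + 1))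
    (i : ℕ) : ∀ j, 1 ≤ j → i + 1 + j ≤ n →
      (gzSplit X L i j ≤ gzSplit X L (i + 1) j ∧
        gzSplit X L (i + 1) j ≤ gzSplit X L i (j + 1)) ∧
      (X i j - gzSplit X L i j ≤ X (i + 1) j - gzSplit X L (i + 1) j ∧
        X (i + 1) j - gzSplit X L (i + 1) j ≤ X i (j + 1) - gzSplit X L i (j + 1)) := by
  have key : ∀ i j, 1 ≤ j → i + 1 + j ≤ n →
      gzSplit X L i j ≤ gzSplit X L i (j + 1) →
      X i j - gzSplit X L i j ≤ X i (j + 1) - gzSplit X L i (j + 1) →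
      (gzSplit X L i j ≤ gzSplit X L (i + 1) j ∧
        gzSplit X L (i + 1) j ≤ gzSplit X L i (j + 1)) ∧
      (X i j - gzSplit X L i j ≤ X (i + 1) j - gzSplit X L (i + 1) j ∧
        X (i + 1) j - gzSplit X L (i + 1) j ≤ X i (j + 1) - gzSplit X L i (j + 1)) := by
    intro i j hj hij h1 h2
    obtain ⟨h3, h4⟩ := hX i j hj hij
    have := gzSplit_step _ _ _ _ (X (i + 1) j) h1 h2 (by linarith) (by linarith)
    rw [gzSplit]
    exact ⟨⟨this.1, this.2.1⟩, this.2.2⟩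
  induction i with
  | zero =>
    intro j hj hij
    have a := hL j hj (by omega)
    have b := hM j hj (by omega)
    apply key 0 j hj hij
    · simpa [gzSplit] using a
    · simpa [gzSplit, h0] using b
  | succ i ih =>
    intro j hj hij
    have a := ih j hj (by omega)
    have b := ih (j + 1) (by omega) (by omega)
    exact key (i + 1) j hj hij (a.1.2.trans b.1.1) (a.2.2.trans b.2.1)

/-- Extension of a weight to all naturals, 1-indexed. -/
noncomputable def gzExtW (n : ℕ) (l : Fin n → ℝ) (j : ℕ) : ℝ :=
  if h : 1 ≤ j ∧ j ≤ n then l ⟨j - 1, by omega⟩ else 0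

/-- Extension of an array to all naturals, with the weight as row 0. -/
noncomputable def gzExt (n : ℕ) (l : Fin n → ℝ) (x : EuclideanSpace ℝ (GZIdx n)) (i j : ℕ) : ℝ :=
  if i = 0 then gzExtW n l j
  else if h : 1 ≤ i ∧ 1 ≤ j ∧ i + j ≤ n then x (gzIdx n i j h.1 h.2.1 h.2.2) else 0

theorem gzExtW_eq (n : ℕ) (l : Fin n → ℝ) (j : ℕ) (h1 : 1 ≤ j) (h2 : j ≤ n) :
    gzExtW n l j = l ⟨j - 1, by omega⟩ := by
  simp [gzExtW, h1, h2]

theorem gzExt_eq (n : ℕ) (l : Fin n → ℝ) (x : EuclideanSpace ℝ (GZIdx n)) (i j : ℕ)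
    (hi : 1 ≤ i) (hj : 1 ≤ j) (h : i + j ≤ n) :
    gzExt n l x i j = x (gzIdx n i j hi hj h) := by
  have : i ≠ 0 := by omega
  simp [gzExt, hi, hj, h, this]

theorem mem_gz_iff (n : ℕ) (l : Fin n → ℝ) (x : EuclideanSpace ℝ (GZIdx n)) (X : ℕ → ℕ → ℝ)
    (h0 : ∀ j (h1 : 1 ≤ j) (h2 : j ≤ n), X 0 j = l ⟨j - 1, by omega⟩)
    (hX : ∀ i j (hi : 1 ≤ i) (hj : 1 ≤ j) (h : i + j ≤ n), X i j = x (gzIdx n i j hi hj h)) :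
    x ∈ gzPolytope n l ↔
      ∀ i j, 1 ≤ j → i + 1 + j ≤ n → X i j ≤ X (i + 1) j ∧ X (i + 1) j ≤ X i (j + 1) := by
  constructor
  · rintro ⟨ha, hb⟩ i j hj hij
    rcases i with _ | i
    · have := ha j hj (by omega)
      rw [h0 j hj (by omega), h0 (j + 1) (by omega) (by omega),
        hX (0 + 1) j (by omega) hj (by omega)]
      exact this
    · have := hb (i + 2) j (by omega) hj (by omega)
      rw [hX (i + 1) j (by omega) hj (by omega), hX (i + 1) (j + 1) (by omega) (by omega) (by omega),
        hX (i + 1 + 1) j (by omega) hj (by omega)]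
      exact this
  · intro H
    refine ⟨fun j h1 h2 => ?_, fun i j hi hj hij => ?_⟩
    · have := H 0 j h1 (by omega)
      rw [h0 j h1 (by omega), h0 (j + 1) (by omega) (by omega),
        hX (0 + 1) j (by omega) h1 (by omega)] at this
      exact this
    · obtain ⟨i, rfl⟩ : ∃ k, i = k + 2 := ⟨i - 2, by omega⟩
      have := H (i + 1) j hj (by omega)
      rw [hX (i + 1) j (by omega) hj (by omega), hX (i + 1) (j + 1) (by omega) (by omega) (by omega),
        hX (i + 1 + 1) j (by omega) hj (by omega)] at this
      exact this

open Pointwise in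
/-- The assignment `λ ↦ Δ_λ` is additive: for dominant integer weights `λ, μ`,
`Δ_{λ+μ} = Δ_λ + Δ_μ` (Minkowski sum). -/
theorem gzPolytope_add (n : ℕ) (hn : 2 ≤ n) (lam mu : Fin n → ℤ)
    (hlam : Monotone lam) (hmu : Monotone mu) :
    gzPolytope n (fun i => ((lam i + mu i : ℤ) : ℝ)) =
      gzPolytope n (fun i => (lam i : ℝ)) + gzPolytope n (fun i => (mu i : ℝ)) := by
  ext x
  rw [Set.mem_add]
  constructor
  · intro hx
    set X := gzExt n (fun i => ((lam i + mu i : ℤ) : ℝ)) x with hXdef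
    set L := gzExtW n (fun i => (lam i : ℝ)) with hLdef
    set M := gzExtW n (fun i => (mu i : ℝ)) with hMdef
    have e0 : ∀ j, X 0 j = L j + M j := by
      intro j
      simp only [hXdef, hLdef, hMdef, gzExt, gzExtW, if_true]
      split_ifs <;> simp
    have eX : ∀ i j (hi : 1 ≤ i) (hj : 1 ≤ j) (h : i + j ≤ n),
        X i j = x (gzIdx n i j hi hj h) := gzExt_eq n _ x
    have mono : ∀ l : Fin n → ℤ, Monotone l → ∀ j, 1 ≤ j → j + 1 ≤ n →
        gzExtW n (fun i => (l i : ℝ)) j ≤ gzExtW n (fun i => (l i : ℝ)) (j + 1) := by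
      intro l hl j hj hjn
      rw [gzExtW_eq n _ j hj (by omega), gzExtW_eq n _ (j + 1) (by omega) hjn]
      exact_mod_cast hl (by simp)
    have hX := (mem_gz_iff n _ x X (fun j h1 h2 => by
      simp only [hXdef, gzExt, if_true]; exact gzExtW_eq n _ j h1 h2) eX).1 hx
    have S := gzSplit_spec n X L M (mono lam hlam) (mono mu hmu) e0 hX
    let y : EuclideanSpace ℝ (GZIdx n) :=
      WithLp.toLp 2 (fun p => gzSplit X L p.1.1.val p.1.2.val)
    have ey : ∀ i j (hi : 1 ≤ i) (hj : 1 ≤ j) (h : i + j ≤ n),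
        gzSplit X L i j = y (gzIdx n i j hi hj h) := fun i j hi hj h => rfl
    refine ⟨y, ?_, x - y, ?_, by abel⟩
    · refine (mem_gz_iff n _ y (gzSplit X L) (fun j h1 h2 => ?_) ey).2
        fun i j hj hij => (S i j hj hij).1
      rw [gzSplit]
      exact gzExtW_eq n _ j h1 h2
    · refine (mem_gz_iff n _ (x - y) (fun i j => X i j - gzSplit X L i j) (fun j h1 h2 => ?_)
        (fun i j hi hj h => ?_)).2 fun i j hj hij => (S i j hj hij).2
      · have := gzExtW_eq n (fun i => (mu i : ℝ)) j h1 h2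
        simp only [gzSplit, e0, add_sub_cancel_left]
        exact this
      · simp only [PiLp.sub_apply, eX i j hi hj h, ey i j hi hj h]
  · rintro ⟨y, ⟨hy1, hy2⟩, z, ⟨hz1, hz2⟩, rfl⟩
    refine ⟨fun j h1 h2 => ?_, fun i j hi hj hij => ?_⟩
    · have a := hy1 j h1 h2
      have b := hz1 j h1 h2
      simp only [PiLp.add_apply, Int.cast_add]
      constructor <;> linarith [a.1, a.2, b.1, b.2]
    · have a := hy2 i j hi hj hij
      have b := hz2 i j hi hj hij
      simp only [PiLp.add_apply]
      constructor <;> linarith [a.1, a.2, b.1, b.2]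
end

section
/- Suppose λ = (λ_1 ≤ ... ≤ λ_n) and λ' = (λ'_1 ≤ ... ≤ λ'_n) are dominant weights in ℤ^n and c ∈ ℤ^N satisfies c + Δ_λ = Δ_{λ'} (as subsets of ℝ^N, where c + Δ_λ = {c + x : x ∈ Δ_λ}). Then λ' - λ is an integer multiple of (1, 1, ..., 1), i.e., there is m ∈ ℤ with λ'_i = λ_i + m for all i. -/
def gzMin (n : ℕ) (l : Fin n → ℤ) : EuclideanSpace ℝ (GZIdx n) :=
  WithLp.toLp 2 (fun p => (l ⟨p.1.2.val - 1, by have := p.2; omega⟩ : ℝ))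

def gzMax (n : ℕ) (l : Fin n → ℤ) : EuclideanSpace ℝ (GZIdx n) :=
  WithLp.toLp 2 (fun p => (l ⟨p.1.1.val + p.1.2.val - 1, by have := p.2; omega⟩ : ℝ))

theorem gzMin_mem (n : ℕ) (l : Fin n → ℤ) (hl : Monotone l) :
    gzMin n l ∈ gzPolytope n (fun i => (l i : ℝ)) := by
  refine ⟨fun j h1 h2 => ⟨?_, ?_⟩, fun i j hi hj hij => ⟨?_, ?_⟩⟩ <;>
    simp only [gzMin, gzIdx, Int.cast_le] <;> apply hl <;> simp only [Fin.mk_le_mk] <;> omega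

theorem gzMax_mem (n : ℕ) (l : Fin n → ℤ) (hl : Monotone l) :
    gzMax n l ∈ gzPolytope n (fun i => (l i : ℝ)) := by
  refine ⟨fun j h1 h2 => ⟨?_, ?_⟩, fun i j hi hj hij => ⟨?_, ?_⟩⟩ <;>
    simp only [gzMax, gzIdx, Int.cast_le] <;> apply hl <;> simp only [Fin.mk_le_mk] <;> omega

/-- If an integral translate of `Δ_λ` equals `Δ_{λ'}` for dominant integer weights
`λ, λ'`, then `λ' - λ` is an integer multiple of `(1, …, 1)`. -/
theorem gz_translate_eq_iff_diff_const (n : ℕ) (hn : 2 ≤ n)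
    (lam lam' : Fin n → ℤ) (hlam : Monotone lam) (hlam' : Monotone lam')
    (c : GZIdx n → ℤ)
    (h : (fun x => (WithLp.toLp 2 (fun p => (c p : ℝ)) : EuclideanSpace ℝ (GZIdx n)) + x) ''
          gzPolytope n (fun i => (lam i : ℝ)) = gzPolytope n (fun i => (lam' i : ℝ))) :
    ∃ m : ℤ, ∀ i, lam' i = lam i + m := by
  have key : ∀ (j : ℕ) (h1 : 1 ≤ j) (h2 : j ≤ n - 1),
      lam' ⟨j - 1, by omega⟩ = lam ⟨j - 1, by omega⟩ +
        c (gzIdx n 1 j (by omega) h1 (by omega)) ∧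
      lam' ⟨j, by omega⟩ = lam ⟨j, by omega⟩ +
        c (gzIdx n 1 j (by omega) h1 (by omega)) := by
    intro j h1 h2
    have a1 := h.subset (Set.mem_image_of_mem _ (gzMin_mem n lam hlam))
    have a2 := h.subset (Set.mem_image_of_mem _ (gzMax_mem n lam hlam))
    obtain ⟨x, hx, ex⟩ := h.superset (gzMin_mem n lam' hlam')
    obtain ⟨y, hy, ey⟩ := h.superset (gzMax_mem n lam' hlam')
    have b1 := (a1.1 j h1 h2).1
    have b2 := (a2.1 j h1 h2).2
    have b3 := (hx.1 j h1 h2).1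
    have b4 := (hy.1 j h1 h2).2
    have ex' := congrArg (fun z => z.ofLp (gzIdx n 1 j (by omega) h1 (by omega))) ex
    have ey' := congrArg (fun z => z.ofLp (gzIdx n 1 j (by omega) h1 (by omega))) ey
    have e : (⟨1 + j - 1, by omega⟩ : Fin n) = ⟨j, by omega⟩ := by
      ext; simp
    have m1 : ∀ l : Fin n → ℤ, (gzMin n l).ofLp (gzIdx n 1 j (by omega) h1 (by omega))
      = (l ⟨j - 1, by omega⟩ : ℝ) := fun l => rfl
    have m2 : ∀ l : Fin n → ℤ, (gzMax n l).ofLp (gzIdx n 1 j (by omega) h1 (by omega))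
      = (l ⟨j, by omega⟩ : ℝ) := fun l => by rw [← e]; rfl
    simp only [PiLp.add_apply, m1, m2] at b1 b2 b3 b4 ex' ey'
    constructor
    · have : (lam' ⟨j - 1, by omega⟩ : ℝ) = lam ⟨j - 1, by omega⟩ +
        c (gzIdx n 1 j (by omega) h1 (by omega)) := by linarith
      exact_mod_cast this
    · have : (lam' ⟨j, by omega⟩ : ℝ) = lam ⟨j, by omega⟩ +
        c (gzIdx n 1 j (by omega) h1 (by omega)) := by linarith
      exact_mod_cast this
  refine ⟨lam' ⟨0, by omega⟩ - lam ⟨0, by omega⟩, ?_⟩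
  rintro ⟨k, hk⟩
  induction k with
  | zero => ring
  | succ k ih =>
    have h1 := ih (by omega)
    have h2 := key (k + 1) (by omega) (by omega)
    simp only [Nat.add_sub_cancel] at h2
    linarith [h2.1, h2.2]
end

section
/- Let A = ⊕_{i=0}^n A^i be a graded commutative algebra over a field k with A^0 ≅ k and A^n ≅ k, and let I be the ideal of A generated by all homogeneous elements x ∈ A such that x · A^{n - deg(x)} = 0. Then I is a homogeneous ideal, the degree-n graded piece of I is zero (so (A/I)^n ≅ k and (A/I)^0 ≅ k), and the quotient graded algebra A/I has Poincaré duality. -/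
/-- A graded algebra `A = ⊕_{i=0}^n A^i` (graded pieces `𝒜 i`) with `A^0 ≅ A^n ≅ k`
has Poincaré duality if for every `0 ≤ i ≤ n` the multiplication pairing
`A^i × A^{n-i} → A^n ≅ k` is non-degenerate. -/
def PoincareDuality {k A : Type*} [Field k] [CommRing A] [Algebra k A]
    (𝒜 : ℕ → Submodule k A) (n : ℕ) : Prop :=
  ∀ i ≤ n,
    (∀ x ∈ 𝒜 i, x ≠ 0 → ∃ y ∈ 𝒜 (n - i), x * y ≠ 0) ∧
    (∀ y ∈ 𝒜 (n - i), y ≠ 0 → ∃ x ∈ 𝒜 i, x * y ≠ 0)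

/-- The ideal generated by all homogeneous elements `x` (say of degree `i`)
with `x · A^{n - i} = 0`; the quotient by it is the Gorenstein quotient. -/
def gorIdeal {k A : Type*} [Field k] [CommRing A] [Algebra k A]
    (𝒜 : ℕ → Submodule k A) (n : ℕ) : Ideal A :=
  Ideal.span {x | ∃ i ≤ n, x ∈ 𝒜 i ∧ ∀ y ∈ 𝒜 (n - i), x * y = 0}

theorem gor_aux_proj {k A : Type*} [Field k] [CommRing A] [Algebra k A]
    (𝒜 : ℕ → Submodule k A) (n : ℕ) [GradedAlgebra 𝒜] {x : A} (hx : x ∈ gorIdeal 𝒜 n) :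
    ∀ y : A, ((DirectSum.decompose 𝒜 (x * y) n : 𝒜 n) : A) = 0 := by
  unfold gorIdeal at hx
  induction hx using Submodule.span_induction with
  | mem x h =>
    obtain ⟨i, hi, hxi, h⟩ := h
    intro y
    rw [DirectSum.coe_decompose_mul_of_left_mem_of_le 𝒜 hxi hi]
    exact h _ (SetLike.coe_mem _)
  | zero => intro y; simp
  | add x z _ _ hx hz =>
    intro y
    rw [add_mul, DirectSum.decompose_add, DirectSum.add_apply, Submodule.coe_add, hx, hz, add_zero]
  | smul a x _ hx =>
    intro y
    rw [smul_eq_mul, mul_comm a x, mul_assoc]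
    exact hx _

theorem gor_aux_mul {k A : Type*} [Field k] [CommRing A] [Algebra k A]
    (𝒜 : ℕ → Submodule k A) (n : ℕ) [GradedAlgebra 𝒜] {x : A} (hx : x ∈ gorIdeal 𝒜 n)
    {i : ℕ} (hi : i ≤ n) (hxi : x ∈ 𝒜 i) : ∀ y ∈ 𝒜 (n - i), x * y = 0 := by
  intro y hy
  have h : x * y ∈ 𝒜 n := by
    have := SetLike.mul_mem_graded hxi hy
    rwa [Nat.add_sub_cancel' hi] at this
  rw [← DirectSum.decompose_of_mem_same 𝒜 h]
  exact gor_aux_proj 𝒜 n hx y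

theorem gor_aux_top {k A : Type*} [Field k] [CommRing A] [Algebra k A]
    (𝒜 : ℕ → Submodule k A) (n : ℕ) [GradedAlgebra 𝒜] {x : A} (hx : x ∈ gorIdeal 𝒜 n)
    (hxn : x ∈ 𝒜 n) : x = 0 := by
  have := gor_aux_mul 𝒜 n hx le_rfl hxn 1 (by rw [Nat.sub_self]; exact SetLike.one_mem_graded 𝒜)
  rwa [mul_one] at this

theorem gor_aux_rank {k A : Type*} [Field k] [CommRing A] [Algebra k A]
    (V : Submodule k A) (I : Ideal A) (h : ∀ x ∈ V, x ∈ I → x = 0) :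
    Module.finrank k (V.map (Ideal.Quotient.mkₐ k I).toLinearMap) = Module.finrank k V := by
  have hinj : Function.Injective ((Ideal.Quotient.mkₐ k I).toLinearMap.domRestrict V) := by
    rw [← LinearMap.ker_eq_bot, LinearMap.ker_eq_bot']
    rintro ⟨x, hx⟩ hm
    have : x = 0 := h x hx (Ideal.Quotient.eq_zero_iff_mem.1 hm)
    exact Subtype.ext this
  rw [← LinearMap.range_domRestrict]
  exact LinearMap.finrank_range_of_inj hinj

theorem gor_aux_nondeg {k A : Type*} [Field k] [CommRing A] [Algebra k A]
    (𝒜 : ℕ → Submodule k A) (n : ℕ) [GradedAlgebra 𝒜] {i : ℕ} (hi : i ≤ n) :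
    ∀ x ∈ (𝒜 i).map (Ideal.Quotient.mkₐ k (gorIdeal 𝒜 n)).toLinearMap, x ≠ 0 →
      ∃ y ∈ (𝒜 (n - i)).map (Ideal.Quotient.mkₐ k (gorIdeal 𝒜 n)).toLinearMap, x * y ≠ 0 := by
  rintro _ ⟨x, hx, rfl⟩ hne
  by_contra! hcon
  refine hne (Ideal.Quotient.eq_zero_iff_mem.2 (Ideal.subset_span ⟨i, hi, hx, fun y hy => ?_⟩))
  have h : x * y ∈ 𝒜 n := by
    have := SetLike.mul_mem_graded hx hy
    rwa [Nat.add_sub_cancel' hi] at this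
  refine gor_aux_top 𝒜 n (Ideal.Quotient.eq_zero_iff_mem.1 ?_) h
  rw [map_mul]
  exact hcon _ ⟨y, hy, rfl⟩

/-- Let `A = ⊕_{i=0}^n A^i` be a graded commutative `k`-algebra with
`A^0 ≅ A^n ≅ k`, and `I` the ideal generated by all homogeneous `x` with
`x · A^{n - deg x} = 0`. Then `I` is homogeneous, its degree-`n` piece is zero,
`(A/I)^0 ≅ (A/I)^n ≅ k`, and `A/I` has Poincaré duality. -/
theorem gorenstein_quotient_has_poincare_duality
    {k A : Type*} [Field k] [CommRing A] [Algebra k A]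
    (𝒜 : ℕ → Submodule k A) (n : ℕ) [GradedAlgebra 𝒜]
    (htop : ∀ i, n < i → 𝒜 i = ⊥)
    (h0 : Module.finrank k (𝒜 0) = 1)
    (hn : Module.finrank k (𝒜 n) = 1) :
    Ideal.IsHomogeneous 𝒜 (gorIdeal 𝒜 n) ∧
    (∀ x ∈ gorIdeal 𝒜 n, x ∈ 𝒜 n → x = 0) ∧
    Module.finrank k
      ((𝒜 0).map (Ideal.Quotient.mkₐ k (gorIdeal 𝒜 n)).toLinearMap) = 1 ∧
    Module.finrank k
      ((𝒜 n).map (Ideal.Quotient.mkₐ k (gorIdeal 𝒜 n)).toLinearMap) = 1 ∧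
    PoincareDuality
      (fun i => (𝒜 i).map (Ideal.Quotient.mkₐ k (gorIdeal 𝒜 n)).toLinearMap) n := by
  refine ⟨?_, fun x hx hxn => gor_aux_top 𝒜 n hx hxn, ?_, ?_, ?_⟩
  · exact Ideal.homogeneous_span 𝒜 _ (fun x ⟨i, _, hx, _⟩ => ⟨i, hx⟩)
  · rw [gor_aux_rank, h0]
    intro x hx hxI
    have hnt : Nontrivial (𝒜 n) := Module.nontrivial_of_finrank_pos (R := k) (by omega)
    obtain ⟨⟨z, hz⟩, hz0⟩ := exists_ne (0 : 𝒜 n)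
    have hz0' : z ≠ 0 := fun h => hz0 (Subtype.ext h)
    have h1 : (⟨1, SetLike.one_mem_graded 𝒜⟩ : 𝒜 0) ≠ 0 := by
      intro h
      have h' : (1 : A) = 0 := congrArg Subtype.val h
      exact hz0' (by rw [← one_mul z, h', zero_mul])
    obtain ⟨c, hc⟩ := (finrank_eq_one_iff_of_nonzero' _ h1).1 h0 ⟨x, hx⟩
    have hc' : c • (1 : A) = x := congrArg Subtype.val hc
    have hxz := gor_aux_mul 𝒜 n hxI (Nat.zero_le n) hx z hz
    rw [← hc', smul_mul_assoc, one_mul] at hxz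
    rcases smul_eq_zero.1 hxz with h | h
    · rw [← hc', h, zero_smul]
    · exact absurd h hz0'
  · rw [gor_aux_rank, hn]
    exact fun x hx hxI => gor_aux_top 𝒜 n hxI hx
  · intro i hi
    refine ⟨gor_aux_nondeg 𝒜 n hi, fun y hy hy0 => ?_⟩
    obtain ⟨x, hx, hxy⟩ := gor_aux_nondeg 𝒜 n (Nat.sub_le n i) y hy hy0
    rw [Nat.sub_sub_self hi] at hx
    exact ⟨x, hx, by rwa [mul_comm]⟩
end

section
/- Let A = ⊕_{i=0}^n A^i be a graded commutative algebra over a field k with A^0 ≅ k and A^n ≅ k, and let I be the ideal of A generated by all homogeneous elements x ∈ A such that x · A^{n - deg(x)} = 0. Then I is minimal among homogeneous ideals whose quotient has Poincaré duality: for every homogeneous ideal J of A such that A/J (with its induced grading) has Poincaré duality, one has I ⊆ J. -/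
/-- The ideal `I = gorIdeal 𝒜 n` is minimal among homogeneous ideals whose quotient
has Poincaré duality: for every homogeneous ideal `J` with `A/J` (with its induced
grading) having Poincaré duality, `I ⊆ J`. -/
theorem gorIdeal_minimal
    {k A : Type*} [Field k] [CommRing A] [Algebra k A]
    (𝒜 : ℕ → Submodule k A) (n : ℕ) [GradedAlgebra 𝒜]
    (htop : ∀ i, n < i → 𝒜 i = ⊥)
    (h0 : Module.finrank k (𝒜 0) = 1)
    (hn : Module.finrank k (𝒜 n) = 1) :
    ∀ J : Ideal A, Ideal.IsHomogeneous 𝒜 J →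
      PoincareDuality (fun i => (𝒜 i).map (Ideal.Quotient.mkₐ k J).toLinearMap) n →
      gorIdeal 𝒜 n ≤ J := by
  intro J _ hPD
  refine Ideal.span_le.mpr ?_
  rintro x ⟨i, hi, hx, hxy⟩
  by_contra hxJ
  obtain ⟨y, hy, hne⟩ := (hPD i hi).1 (Ideal.Quotient.mk J x)
    (Submodule.mem_map.mpr ⟨x, hx, rfl⟩)
    (fun h => hxJ (Ideal.Quotient.eq_zero_iff_mem.mp h))
  obtain ⟨z, hz, rfl⟩ := Submodule.mem_map.mp hy
  apply hne
  change Ideal.Quotient.mk J x * Ideal.Quotient.mk J z = 0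
  rw [← map_mul, hxy z hz, map_zero]
end

section
/- Let R be a commutative ring, let a_1, ..., a_r ∈ R, and let f ∈ R[t_1, ..., t_r] be a homogeneous polynomial of degree m with 0 ≤ m ≤ n. In the polynomial ring R[x_1, ..., x_r], applying the differential operator f(∂_1, ..., ∂_r) (obtained by substituting the formal partial derivative ∂_i = ∂/∂x_i for t_i in f) to the polynomial (x_1 a_1 + ... + x_r a_r)^n yields f(∂_1, ..., ∂_r) · (x_1 a_1 + ... + x_r a_r)^n = (n!/(n-m)!) · f(a_1, ..., a_r) · (x_1 a_1 + ... + x_r a_r)^{n-m}. In particular, when m = n the result is the constant n! · f(a_1, ..., a_r). -/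
open MvPolynomial

/-- For `f = Σ_β c_β t^β`, the differential operator `f(∂_1, …, ∂_r)` applied to `g`:
`Σ_β c_β ∂_1^{β_1} ⋯ ∂_r^{β_r} g`, where `∂_i` is the formal partial derivative
with respect to the `i`-th variable. -/
noncomputable def diffOp {R : Type*} [CommRing R] {r : ℕ}
    (f g : MvPolynomial (Fin r) R) : MvPolynomial (Fin r) R :=
  ∑ β ∈ f.support,
    MvPolynomial.coeff β f •
      (List.finRange r).foldr (fun i p => (fun q => MvPolynomial.pderiv i q)^[β i] p) g

theorem aux_step {R : Type*} [CommRing R] {r : ℕ} (n : ℕ) (a : Fin r → R) (i : Fin r) (c : R) (j k : ℕ) :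
    (fun q => MvPolynomial.pderiv i q)^[k] (MvPolynomial.C (c * (n.descFactorial j : R)) *
      (∑ i, MvPolynomial.C (a i) * MvPolynomial.X i) ^ (n - j)) =
    MvPolynomial.C (c * a i ^ k * (n.descFactorial (j + k) : R)) *
      (∑ i, MvPolynomial.C (a i) * MvPolynomial.X i : MvPolynomial (Fin r) R) ^ (n - (j + k)) := by
  induction k with
  | zero => simp
  | succ k ih =>
    rw [Function.iterate_succ_apply', ih]
    have hL : MvPolynomial.pderiv i (∑ i, MvPolynomial.C (a i) * MvPolynomial.X i :
        MvPolynomial (Fin r) R) = MvPolynomial.C (a i) := by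
      simp [MvPolynomial.pderiv_X, Pi.single_apply]
    simp only [MvPolynomial.pderiv_C_mul, MvPolynomial.pderiv_pow, hL]
    rw [← add_assoc, Nat.descFactorial_succ, Nat.sub_sub, Nat.cast_mul]
    simp only [map_mul, map_pow, map_natCast, Nat.sub_sub]
    ring

theorem aux_fold {R : Type*} [CommRing R] {r : ℕ} (n : ℕ) (a : Fin r → R) (β : Fin r → ℕ)
    (l : List (Fin r)) :
    l.foldr (fun i p => (fun q => MvPolynomial.pderiv i q)^[β i] p)
      ((∑ i, MvPolynomial.C (a i) * MvPolynomial.X i : MvPolynomial (Fin r) R) ^ n) =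
    MvPolynomial.C ((l.map (fun i => a i ^ β i)).prod * (n.descFactorial (l.map β).sum : R)) *
      (∑ i, MvPolynomial.C (a i) * MvPolynomial.X i : MvPolynomial (Fin r) R) ^
        (n - (l.map β).sum) := by
  induction l with
  | nil => simp
  | cons i l ih =>
    rw [List.foldr_cons, ih, aux_step]
    simp only [List.map_cons, List.prod_cons, List.sum_cons]
    rw [add_comm (β i), mul_comm (a i ^ β i)]

/-- Applying `f(∂_1, …, ∂_r)` for a homogeneous polynomial `f` of degree `m ≤ n` to
`(x_1 a_1 + ⋯ + x_r a_r)^n` yields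
`(n!/(n-m)!) · f(a_1, …, a_r) · (x_1 a_1 + ⋯ + x_r a_r)^{n-m}`. -/
theorem diffOp_homogeneous_apply_pow_linear {R : Type*} [CommRing R] {r : ℕ}
    (n m : ℕ) (hm : m ≤ n) (a : Fin r → R)
    (f : MvPolynomial (Fin r) R) (hf : f.IsHomogeneous m) :
    diffOp f ((∑ i, MvPolynomial.C (a i) * MvPolynomial.X i) ^ n) =
      (n.factorial / (n - m).factorial) •
        (MvPolynomial.C (MvPolynomial.eval a f) *
          (∑ i, MvPolynomial.C (a i) * MvPolynomial.X i) ^ (n - m)) := by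
  rw [← Nat.descFactorial_eq_div hm, MvPolynomial.eval_eq', diffOp, map_sum, Finset.sum_mul,
    Finset.smul_sum]
  refine Finset.sum_congr rfl fun β hβ => ?_
  have hs : ((List.finRange r).map β).sum = m := by
    have h := hf (MvPolynomial.mem_support_iff.mp hβ)
    rw [← List.ofFn_eq_map, List.sum_ofFn, ← h, Finsupp.weight_apply,
      Finsupp.sum_fintype _ _ (by simp)]
    simp
  have hp : ((List.finRange r).map (fun i => a i ^ β i)).prod = ∏ i, a i ^ β i := by
    rw [← List.ofFn_eq_map, List.prod_ofFn]
  rw [aux_fold, hs, hp, MvPolynomial.smul_eq_C_mul, nsmul_eq_mul]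
  simp only [map_mul, map_natCast]
  ring
end

section
/- Let v_1, ..., v_8 ∈ ℤ^3 be the eight vectors (±1, ±1, ±1). Call indices i, j adjacent if v_i and v_j differ in exactly one coordinate (so the adjacent pairs are exactly the 12 edges of the cube, and each index i has exactly 3 adjacent indices). Suppose c assigns an integer c_{ij} = c_{ji} to each adjacent pair {i, j}, and suppose c satisfies the following balancing condition: for every index i and every u ∈ ℤ^3 with ⟨u, v_i⟩ = 0, one has Σ_{j adjacent to i} ⟨u, v_j⟩ c_{ij} = 0. Then c is constant: all twelve values c_{ij} are equal. (Hence the group of such c is free abelian of rank 1.) -/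
/-- The eight vectors `(±1, ±1, ±1)` in `ℤ^3`: the vertices of the cube. -/
def cubeVert : Fin 8 → (Fin 3 → ℤ) :=
  ![![1, 1, 1], ![1, 1, -1], ![1, -1, 1], ![-1, 1, 1],
    ![-1, -1, -1], ![-1, -1, 1], ![-1, 1, -1], ![1, -1, -1]]

/-- Indices `i, j` are adjacent if `v_i` and `v_j` differ in exactly one coordinate
(the adjacent pairs are exactly the 12 edges of the cube). -/
abbrev CubeAdj (i j : Fin 8) : Prop :=
  (Finset.univ.filter fun t : Fin 3 => cubeVert i t ≠ cubeVert j t).card = 1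

/-- A codimension-1 Minkowski weight on the fan over the cube is constant: if `c`
assigns an integer `c i j = c j i` to each adjacent pair `{i, j}` and satisfies the
balancing condition `Σ_{j adj i} ⟨u, v_j⟩ c i j = 0` for every `i` and every
`u ∈ ℤ^3` with `⟨u, v_i⟩ = 0`, then all twelve values are equal. -/
theorem cube_fan_codim_one_minkowski_weights_constant
    (c : Fin 8 → Fin 8 → ℤ)
    (hsymm : ∀ i j, CubeAdj i j → c i j = c j i)
    (hbal : ∀ (i : Fin 8) (u : Fin 3 → ℤ), (∑ t, u t * cubeVert i t = 0) →
      ∑ j ∈ Finset.univ.filter (fun j => CubeAdj i j),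
        (∑ t, u t * cubeVert j t) * c i j = 0) :
    ∀ i j i' j', CubeAdj i j → CubeAdj i' j' → c i j = c i' j' := by
  have nb : ∀ i : Fin 8, (Finset.univ.filter (fun j => CubeAdj i j)) =
      (![{1, 2, 3}, {0, 6, 7}, {0, 5, 7}, {0, 5, 6}, {5, 6, 7}, {2, 3, 4}, {1, 3, 4},
        {1, 2, 4}] : Fin 8 → Finset (Fin 8)) i := by decide
  have h1 : ∀ i : Fin 8, _ := fun i =>
    hbal i ![cubeVert i 0, - cubeVert i 1, 0] (by revert i; decide)
  have h2 : ∀ i : Fin 8, _ := fun i =>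
    hbal i ![0, cubeVert i 1, - cubeVert i 2] (by revert i; decide)
  simp only [nb] at h1 h2
  have key : ∀ i j, CubeAdj i j → c i j = c 0 1 := by
    have a0 := h1 0
    have a1 := h1 1
    have a2 := h1 2
    have a3 := h1 3
    have a4 := h1 4
    have a5 := h1 5
    have a6 := h1 6
    have a7 := h1 7
    have b0 := h2 0
    have b1 := h2 1
    have b2 := h2 2
    have b3 := h2 3
    have b4 := h2 4
    have b5 := h2 5
    have b6 := h2 6
    have b7 := h2 7
    simp [cubeVert, Fin.sum_univ_three] at a0 a1 a2 a3 a4 a5 a6 a7 b0 b1 b2 b3 b4 b5 b6 b7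
    have s1 := hsymm 0 1 (by decide)
    have s2 := hsymm 0 2 (by decide)
    have s3 := hsymm 0 3 (by decide)
    have s4 := hsymm 1 6 (by decide)
    have s5 := hsymm 1 7 (by decide)
    have s6 := hsymm 2 5 (by decide)
    have s7 := hsymm 2 7 (by decide)
    have s8 := hsymm 3 5 (by decide)
    have s9 := hsymm 3 6 (by decide)
    have s10 := hsymm 4 5 (by decide)
    have s11 := hsymm 4 6 (by decide)
    have s12 := hsymm 4 7 (by decide)
    intro i j hij
    have hj : j ∈ Finset.univ.filter (fun j => CubeAdj i j) := by simpa using hij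
    rw [nb] at hj
    clear hij h1 h2 nb hsymm hbal
    fin_cases i <;> simp at hj <;> rcases hj with rfl | rfl | rfl <;> simp only [Fin.reduceFinMk, Fin.zero_eta, Fin.mk_one] <;> omega
  intro i j i' j' h h'
  rw [key i j h, key i' j' h']
end
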